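/- Let N ≥ 2, T > 0, M ≥ 1, 1 ≤ q < ∞, and p ∈ (Nq/(N−1), ∞]. Assume v ∈ X_{T,M}. Then there exists C > 0, independent of T and M, such that for any r ∈ [q,p], ‖F[v](·,x_N,t)‖_{L^r(ℝ^{N−1})} ≤ C (1 + (x_N^{−1} t)^{1/2}) t^{−1/2} e^{Mt} ‖v‖_{X_{T,M}} for all x_N ∈ (0,∞) and 0 < t < T. -/

import Mathlib

open MeasureTheory Real Set ENNReal

noncomputable section

abbrev E' (N : ℕ) := EuclideanSpace ℝ (Fin (N - 1))
abbrev HS (N : ℕ) := E' N × ℝ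

/-- The half-space `ℝ^N_+ = ℝ^{N-1} × (0,∞)`. -/
def halfSpace (N : ℕ) : Set (HS N) := {x | 0 < x.2}

/-- The closed half-space `closure(ℝ^N_+)`. -/
def closedHalfSpace (N : ℕ) : Set (HS N) := {x | 0 ≤ x.2}

/-- The Dirichlet heat kernel on the half-space. -/
def GammaD (N : ℕ) (x y : HS N) (t : ℝ) : ℝ :=
  (4 * π * t) ^ (-(N : ℝ) / 2) *
    (Real.exp (-(‖x.1 - y.1‖ ^ 2 + (x.2 - y.2) ^ 2) / (4 * t)) -
      Real.exp (-(‖x.1 - y.1‖ ^ 2 + (x.2 + y.2) ^ 2) / (4 * t)))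

/-- The Dirichlet heat semigroup on the half-space. -/
def S1 (N : ℕ) (t : ℝ) (φ : HS N → ℝ) (x : HS N) : ℝ :=
  ∫ y in halfSpace N, GammaD N x y t * φ y

/-- The normalizing constant `C_N` for the kernel `P`. -/
def PC (N : ℕ) : ℝ :=
  (∫ z : E' N, (1 + ‖z‖ ^ 2) ^ (-(N : ℝ) / 2))⁻¹

/-- The kernel `P(x',x_N,t) = C_N (x_N+t)^{1-N} (1+|x'/(x_N+t)|²)^{-N/2}`. -/
def Pker (N : ℕ) (x' : E' N) (xN t : ℝ) : ℝ :=
  PC N * (xN + t) ^ ((1 : ℝ) - N) * (1 + ‖x'‖ ^ 2 / (xN + t) ^ 2) ^ (-(N : ℝ) / 2)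

/-- The semigroup `[S_2(t)ψ](x) = ∫_{ℝ^{N-1}} P(x'-y',x_N,t) ψ(y') dy'`. -/
def S2 (N : ℕ) (t : ℝ) (ψ : E' N → ℝ) (x : HS N) : ℝ :=
  ∫ y' : E' N, Pker N (x.1 - y') x.2 t * ψ y'

/-- The normal derivative `∂_{x_N} v` of a space-time function `v`. -/
def dN (N : ℕ) (v : HS N → ℝ → ℝ) (x : HS N) (t : ℝ) : ℝ :=
  deriv (fun s => v (x.1, s) t) x.2

/-- The nonlocal operator
`F[v](x,t) = ∫_{ℝ^{N-1}} P(x'-y',x_N,0) ∂_{x_N}v(y',0,t) dy'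
  + ∫_0^t ∫_{ℝ^{N-1}} ∂_t P(x'-y',x_N,t-s) ∂_{x_N}v(y',0,s) dy' ds`. -/
def Fop (N : ℕ) (v : HS N → ℝ → ℝ) (x : HS N) (t : ℝ) : ℝ :=
  (∫ y' : E' N, Pker N (x.1 - y') x.2 0 * dN N v (y', 0) t) +
    ∫ s in Ioo (0 : ℝ) t, ∫ y' : E' N,
      deriv (fun τ => Pker N (x.1 - y') x.2 τ) (t - s) * dN N v (y', 0) s

/-- `D[v](x,t) = ∫_0^t [S_1(t-s)F[v](s)](x) ds`. -/
def Dop (N : ℕ) (v : HS N → ℝ → ℝ) (x : HS N) (t : ℝ) : ℝ :=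
  ∫ s in Ioo (0 : ℝ) t, S1 N (t - s) (fun y => Fop N v y s) x

/-- `L^p` norm on the half-space. -/
def hLpNorm (N : ℕ) (p : ℝ≥0∞) (f : HS N → ℝ) : ℝ≥0∞ :=
  eLpNorm f p (volume.restrict (halfSpace N))

/-- `L^r` norm on the boundary `ℝ^{N-1}`. -/
def bLpNorm (N : ℕ) (r : ℝ≥0∞) (g : E' N → ℝ) : ℝ≥0∞ :=
  eLpNorm g r (volume : Measure (E' N))

/-- `E[v](t) = t^{(N/2)(1/q-1/p)} [‖v(t)‖_{L^p} + t^{1/2} ‖∂_{x_N}v(t)‖_{L^p}]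
  + sup_{q≤r≤p} t^{1/2} ‖∂_{x_N}v(·,0,t)‖_{L^r(ℝ^{N-1})}`. -/
def Enorm (N : ℕ) (q p : ℝ≥0∞) (v : HS N → ℝ → ℝ) (t : ℝ) : ℝ≥0∞ :=
  ENNReal.ofReal (t ^ ((N : ℝ) / 2 * ((q⁻¹).toReal - (p⁻¹).toReal))) *
      (hLpNorm N p (fun x => v x t) +
        ENNReal.ofReal (t ^ ((1 : ℝ) / 2)) * hLpNorm N p (fun x => dN N v x t)) +
    ⨆ r ∈ Icc q p, ENNReal.ofReal (t ^ ((1 : ℝ) / 2)) *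
      bLpNorm N r (fun x' => dN N v (x', 0) t)

/-- The norm of the space `X_{T,M}`: `‖v‖_{X_{T,M}} = sup_{0<t<T} e^{-Mt} E[v](t)`. -/
def XNorm (N : ℕ) (q p : ℝ≥0∞) (T M : ℝ) (v : HS N → ℝ → ℝ) : ℝ≥0∞ :=
  ⨆ t ∈ Ioo (0 : ℝ) T, ENNReal.ofReal (Real.exp (-M * t)) * Enorm N q p v t

/-- Membership in `X_{T,M}`: `v, ∂_{x_N}v ∈ C(closure(ℝ^N_+) × (0,T))` and
`‖v‖_{X_{T,M}} < ∞`. -/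
def memX (N : ℕ) (q p : ℝ≥0∞) (T M : ℝ) (v : HS N → ℝ → ℝ) : Prop :=
  ContinuousOn (fun z : HS N × ℝ => v z.1 z.2) (closedHalfSpace N ×ˢ Ioo 0 T) ∧
  ContinuousOn (fun z : HS N × ℝ => dN N v z.1 z.2) (closedHalfSpace N ×ˢ Ioo 0 T) ∧
  XNorm N q p T M v < ∞

/-!
The kernel `P(·, x_N, t)` is a probability density on `ℝ^{N-1}`, being the rescaling by
`R = x_N + t` of a fixed profile, and the factor by which its time derivative differs from it is at
most `N / R` in absolute value. The operator `F[v]` is a sum of convolutions of the boundary trace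
`g(s) = ∂_{x_N} v(·, 0, s)` with these kernels, so the inequalities of Minkowski and Young give

  `‖F[v](·, x_N, t)‖_r ≤ ‖g(t)‖_r + ∫_0^t N (x_N + t - s)⁻¹ ‖g(s)‖_r ds`.

The norm of `X_{T,M}` controls `‖g(s)‖_r` by `s^{-1/2} e^{Ms}`, and the remaining time integral
`∫_0^t (x_N + t - s)⁻¹ s^{-1/2} ds` is at most `2 t^{-1/2} + x_N^{-1/2}`.
-/

open Function Filter ContinuousLinearMap
open scoped Convolution

section Minkowski

variable {α β E : Type*} [MeasurableSpace α] [MeasurableSpace β] {μ : Measure α} {ν : Measure β}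
  [NormedAddCommGroup E] [NormedSpace ℝ E]

theorem lintegral_rpow_le_of_weight {g w : β → ℝ≥0∞} {p : ℝ} (hp : 1 ≤ p)
    (hg : AEMeasurable g ν) (hw : AEMeasurable w ν) (hw_int : ∫⁻ z, w z ∂ν ≠ ∞)
    (hgw : ∀ᵐ z ∂ν, w z = 0 → g z = 0) :
    (∫⁻ z, g z ∂ν) ^ p ≤ (∫⁻ z, w z ∂ν) ^ (p - 1) * ∫⁻ z, w z ^ (1 - p) * g z ^ p ∂ν := by
  have hp0 : 0 < p := one_pos.trans_le hp
  have factor : ∀ᵐ z ∂ν, g z ≤ w z ^ (1 - p⁻¹) * (w z ^ (1 - p) * g z ^ p) ^ p⁻¹ := by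
    filter_upwards [hgw, ae_lt_top' hw hw_int] with z hz hz_top
    rcases eq_or_ne (w z) 0 with h0 | h0
    · simp [hz h0]
    have exponents : 1 - p⁻¹ + (1 - p) * p⁻¹ = 0 := by field_simp; ring
    rw [ENNReal.mul_rpow_of_nonneg _ _ (by positivity), ENNReal.rpow_rpow_inv hp0.ne',
      ← ENNReal.rpow_mul, ← mul_assoc, ← ENNReal.rpow_add _ _ h0 hz_top.ne, exponents,
      ENNReal.rpow_zero, one_mul]
  calc (∫⁻ z, g z ∂ν) ^ p
      ≤ ((∫⁻ z, w z ∂ν) ^ (1 - p⁻¹) * (∫⁻ z, w z ^ (1 - p) * g z ^ p ∂ν) ^ p⁻¹) ^ p := by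
        gcongr
        exact (lintegral_mono_ae factor).trans <| ENNReal.lintegral_mul_norm_pow_le hw
          ((hw.pow_const _).mul (hg.pow_const _)) (sub_nonneg.2 (inv_le_one_of_one_le₀ hp))
          (by positivity) (by ring)
    _ = (∫⁻ z, w z ∂ν) ^ (p - 1) * ∫⁻ z, w z ^ (1 - p) * g z ^ p ∂ν := by
        rw [ENNReal.mul_rpow_of_nonneg _ _ hp0.le, ENNReal.rpow_inv_rpow hp0.ne',
          ← ENNReal.rpow_mul, sub_mul, inv_mul_cancel₀ hp0.ne', one_mul]

variable [SFinite μ] [SFinite ν]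

-- Minkowski's inequality with finite exponent: the weight in the previous lemma is chosen as
-- `w z = ‖f(·, z)‖_p`, for which `∫⁻ x, w z ^ (1 - p) * f (x, z) ^ p ∂μ ≤ w z`.
theorem lintegral_rpow_lintegral_le {f : α × β → ℝ≥0∞} (hf : Measurable f) {p : ℝ} (hp : 1 ≤ p) :
    ∫⁻ x, (∫⁻ z, f (x, z) ∂ν) ^ p ∂μ ≤ (∫⁻ z, (∫⁻ x, f (x, z) ^ p ∂μ) ^ p⁻¹ ∂ν) ^ p := by
  have hp0 : 0 < p := one_pos.trans_le hp
  set a : β → ℝ≥0∞ := fun z ↦ (∫⁻ x, f (x, z) ^ p ∂μ) ^ p⁻¹ with ha_def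
  have ha : Measurable a := ((hf.pow_const p).lintegral_prod_left').pow_const _
  by_cases ha_int : ∫⁻ z, a z ∂ν = ∞
  · simp [ha_int, ENNReal.top_rpow_of_pos hp0]
  have f_eq_zero : ∀ᵐ x ∂μ, ∀ᵐ z ∂ν, a z = 0 → f (x, z) = 0 := by
    rw [Measure.ae_ae_comm ((measurableSet_eq_fun (by fun_prop) (by fun_prop)).himp
      (measurableSet_eq_fun (by fun_prop) (by fun_prop)))]
    refine .of_forall fun z ↦ ?_
    rw [eventually_imp_distrib_left]
    intro hz
    rw [ha_def, ENNReal.rpow_eq_zero_iff_of_pos (by positivity),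
      lintegral_eq_zero_iff (f := fun x ↦ f (x, z) ^ p) (by fun_prop)] at hz
    filter_upwards [hz] with x hx
    exact (ENNReal.rpow_eq_zero_iff_of_pos hp0).1 hx
  have weight_mul_le : ∀ᵐ z ∂ν, a z ^ (1 - p) * ∫⁻ x, f (x, z) ^ p ∂μ ≤ a z := by
    filter_upwards [ae_lt_top ha ha_int] with z hz
    rw [show ∫⁻ x, f (x, z) ^ p ∂μ = a z ^ p from (ENNReal.rpow_inv_rpow hp0.ne' _).symm]
    rcases eq_or_ne (a z) 0 with h0 | h0
    · simp [h0, hp0]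
    · rw [← ENNReal.rpow_add _ _ h0 hz.ne, sub_add_cancel, ENNReal.rpow_one]
  have hfw : Measurable fun w : α × β ↦ a w.2 ^ (1 - p) * f w ^ p := by fun_prop
  calc ∫⁻ x, (∫⁻ z, f (x, z) ∂ν) ^ p ∂μ
      ≤ ∫⁻ x, (∫⁻ z, a z ∂ν) ^ (p - 1) * ∫⁻ z, a z ^ (1 - p) * f (x, z) ^ p ∂ν ∂μ := by
        refine lintegral_mono_ae (f_eq_zero.mono fun x hx ↦ ?_)
        exact lintegral_rpow_le_of_weight hp (by fun_prop) ha.aemeasurable ha_int hx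
    _ = (∫⁻ z, a z ∂ν) ^ (p - 1) * ∫⁻ z, a z ^ (1 - p) * ∫⁻ x, f (x, z) ^ p ∂μ ∂ν := by
        rw [lintegral_const_mul _ hfw.lintegral_prod_right', lintegral_lintegral_swap
          hfw.aemeasurable]
        congr with z
        exact lintegral_const_mul (a z ^ (1 - p)) (f := fun x ↦ f (x, z) ^ p) (by fun_prop)
    _ ≤ (∫⁻ z, a z ∂ν) ^ (p - 1) * (∫⁻ z, a z ∂ν) ^ (1 : ℝ) := by
        rw [ENNReal.rpow_one]
        gcongr (∫⁻ z, a z ∂ν) ^ (p - 1) * ?_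
        exact lintegral_mono_ae weight_mul_le
    _ = (∫⁻ z, a z ∂ν) ^ p := by
        rw [← ENNReal.rpow_add_of_nonneg _ _ (sub_nonneg.2 hp) one_pos.le, sub_add_cancel]

theorem measurable_eLpNormEssSup_prodMk_right {f : α × β → ℝ≥0∞} (hf : Measurable f) :
    Measurable fun z ↦ eLpNormEssSup (fun x ↦ f (x, z)) μ := by
  refine measurable_of_Iic fun c ↦ ?_
  have preimage_eq : (fun z ↦ eLpNormEssSup (fun x ↦ f (x, z)) μ) ⁻¹' Iic c =
      {z | μ ((fun x ↦ (x, z)) ⁻¹' {w | c < f w}) = 0} := by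
    ext z
    have essSup_le_iff : eLpNormEssSup (fun x ↦ f (x, z)) μ ≤ c ↔ ∀ᵐ x ∂μ, f (x, z) ≤ c :=
      ⟨fun h ↦ (enorm_ae_le_eLpNormEssSup (fun x ↦ f (x, z)) μ).mono fun x hx ↦ hx.trans h,
        fun h ↦ eLpNormEssSup_le_of_ae_enorm_bound (f := fun x ↦ f (x, z)) h⟩
    simp only [mem_preimage, mem_Iic, essSup_le_iff, ae_iff, not_le]
    rfl
  rw [preimage_eq]
  exact measurable_measure_prodMk_right (measurableSet_lt measurable_const hf)
    (measurableSet_singleton 0)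

theorem eLpNorm_lintegral_le {f : α × β → ℝ≥0∞} (hf : Measurable f) {r : ℝ≥0∞} (hr : 1 ≤ r) :
    eLpNorm (fun x ↦ ∫⁻ z, f (x, z) ∂ν) r μ ≤ ∫⁻ z, eLpNorm (fun x ↦ f (x, z)) r μ ∂ν := by
  rcases eq_or_ne r ∞ with rfl | hr_top
  · have hf_le : ∀ᵐ x ∂μ, ∀ᵐ z ∂ν, f (x, z) ≤ eLpNormEssSup (fun x ↦ f (x, z)) μ := by
      have hf_essSup : Measurable fun w : α × β ↦ eLpNormEssSup (fun x ↦ f (x, w.2)) μ :=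
        (measurable_eLpNormEssSup_prodMk_right hf).comp measurable_snd
      rw [Measure.ae_ae_comm]
      · exact .of_forall fun z ↦ enorm_ae_le_eLpNormEssSup (fun x ↦ f (x, z)) μ
      · exact measurableSet_le hf hf_essSup
    simp only [eLpNorm_exponent_top]
    exact eLpNormEssSup_le_of_ae_enorm_bound (hf_le.mono fun x hx ↦ lintegral_mono_ae hx)
  · have hr0 : r ≠ 0 := (one_pos.trans_le hr).ne'
    simp only [eLpNorm_eq_lintegral_rpow_enorm_toReal hr0 hr_top, enorm_eq_self, one_div]
    rw [ENNReal.rpow_inv_le_iff (ENNReal.toReal_pos hr0 hr_top)]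
    exact lintegral_rpow_lintegral_le hf (ENNReal.toReal_mono hr_top hr)

theorem eLpNorm_integral_le {f : α × β → E} (hf : AEStronglyMeasurable f (μ.prod ν))
    {r : ℝ≥0∞} (hr : 1 ≤ r) :
    eLpNorm (fun x ↦ ∫ z, f (x, z) ∂ν) r μ ≤ ∫⁻ z, eLpNorm (fun x ↦ f (x, z)) r μ ∂ν := by
  obtain ⟨g, hg, hfg⟩ := hf
  have hfg_right : ∀ᵐ x ∂μ, ∀ᵐ z ∂ν, f (x, z) = g (x, z) := Measure.ae_ae_of_ae_prod hfg
  have hfg_left : ∀ᵐ z ∂ν, ∀ᵐ x ∂μ, f (x, z) = g (x, z) :=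
    Measure.ae_ae_of_ae_prod (Measure.measurePreserving_swap.quasiMeasurePreserving.ae hfg)
  calc eLpNorm (fun x ↦ ∫ z, f (x, z) ∂ν) r μ
      ≤ eLpNorm (fun x ↦ ∫⁻ z, ‖g (x, z)‖ₑ ∂ν) r μ := by
        refine eLpNorm_mono_enorm_ae (hfg_right.mono fun x hx ↦ ?_)
        rw [integral_congr_ae hx]
        exact enorm_integral_le_lintegral_enorm _
    _ ≤ ∫⁻ z, eLpNorm (fun x ↦ ‖g (x, z)‖ₑ) r μ ∂ν := eLpNorm_lintegral_le hg.enorm hr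
    _ = ∫⁻ z, eLpNorm (fun x ↦ f (x, z)) r μ ∂ν := by
        refine lintegral_congr_ae (hfg_left.mono fun z hz ↦ ?_)
        exact (eLpNorm_enorm _).trans (eLpNorm_congr_ae hz).symm

end Minkowski

section Young

variable {𝕜 G E₁ E₂ F : Type*} [NontriviallyNormedField 𝕜]
  [NormedAddCommGroup E₁] [NormedSpace 𝕜 E₁] [NormedAddCommGroup E₂] [NormedSpace 𝕜 E₂]
  [NormedAddCommGroup F] [NormedSpace 𝕜 F] [NormedSpace ℝ F]
  [AddGroup G] [MeasurableSpace G] [MeasurableAdd₂ G] [MeasurableNeg G]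
  {μ : Measure G} [SFinite μ] [μ.IsAddRightInvariant]

theorem eLpNorm_convolution_le (L : E₁ →L[𝕜] E₂ →L[𝕜] F) {f : G → E₁} {g : G → E₂}
    (hf : AEStronglyMeasurable f μ) (hg : AEStronglyMeasurable g μ) {r : ℝ≥0∞} (hr : 1 ≤ r) :
    eLpNorm (f ⋆[L, μ] g) r μ ≤ ‖L‖ₑ * eLpNorm f 1 μ * eLpNorm g r μ := by
  have translate (t : G) : eLpNorm (fun x ↦ L (f t) (g (x - t))) r μ ≤
      ‖L‖ₑ * ‖f t‖ₑ * eLpNorm g r μ := by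
    rw [← eLpNorm_comp_measurePreserving hg (measurePreserving_sub_right μ t)]
    refine eLpNorm_le_mul_eLpNorm_of_ae_le_mul'' r
      (hg.comp_measurePreserving (measurePreserving_sub_right μ t)) (.of_forall fun x ↦ ?_)
    exact L.le_opENorm₂ (f t) (g (x - t))
  calc eLpNorm (f ⋆[L, μ] g) r μ
      ≤ ∫⁻ t, eLpNorm (fun x ↦ L (f t) (g (x - t))) r μ ∂μ :=
        eLpNorm_integral_le (hf.convolution_integrand L hg) hr
    _ ≤ ∫⁻ t, ‖L‖ₑ * ‖f t‖ₑ * eLpNorm g r μ ∂μ := lintegral_mono translate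
    _ = ‖L‖ₑ * eLpNorm f 1 μ * eLpNorm g r μ := by
        rw [lintegral_mul_const'' _ (hf.enorm.const_mul _), lintegral_const_mul'' _ hf.enorm,
          eLpNorm_one_eq_lintegral_enorm]

section TimeDependentKernel

variable {β : Type*} [MeasurableSpace β] {ν : Measure β} [SFinite ν]
  (L : E₁ →L[𝕜] E₂ →L[𝕜] F) {k : G × β → E₁} {g : G × β → E₂}

theorem aestronglyMeasurable_convolution_prodMk (hk : AEStronglyMeasurable k (μ.prod ν))
    (hg : AEStronglyMeasurable g (μ.prod ν)) :
    AEStronglyMeasurable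
      (fun w : G × β ↦ ((fun z ↦ k (z, w.2)) ⋆[L, μ] fun y ↦ g (y, w.2)) w.1) (μ.prod ν) := by
  have hk' : AEStronglyMeasurable (fun w : (G × β) × G ↦ k (w.2, w.1.2)) ((μ.prod ν).prod μ) :=
    hk.comp_quasiMeasurePreserving <| (QuasiMeasurePreserving.prodMap (.id μ)
      Measure.quasiMeasurePreserving_snd).comp Measure.measurePreserving_swap.quasiMeasurePreserving
  have hg' : AEStronglyMeasurable (fun w : (G × β) × G ↦ g (w.1.1 - w.2, w.1.2))
      ((μ.prod ν).prod μ) :=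
    hg.comp_quasiMeasurePreserving <| QuasiMeasurePreserving.prod_of_left (by fun_prop) <|
      .of_forall fun z ↦ ((measurePreserving_sub_right μ z).prod (.id ν)).quasiMeasurePreserving
  exact (L.aestronglyMeasurable_comp₂ hk' hg').integral_prod_right'

theorem eLpNorm_integral_convolution_le (hk : AEStronglyMeasurable k (μ.prod ν))
    (hg : AEStronglyMeasurable g (μ.prod ν)) {r : ℝ≥0∞} (hr : 1 ≤ r) :
    eLpNorm (fun x ↦ ∫ s, ((fun z ↦ k (z, s)) ⋆[L, μ] fun y ↦ g (y, s)) x ∂ν) r μ ≤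
      ∫⁻ s, ‖L‖ₑ * eLpNorm (fun z ↦ k (z, s)) 1 μ * eLpNorm (fun y ↦ g (y, s)) r μ ∂ν := by
  refine (eLpNorm_integral_le (aestronglyMeasurable_convolution_prodMk L hk hg) hr).trans ?_
  refine lintegral_mono_ae ?_
  filter_upwards [hk.prod_swap.prodMk_left, hg.prod_swap.prodMk_left] with s hks hgs
  exact eLpNorm_convolution_le L hks hgs hr

end TimeDependentKernel

end Young

section Kernel

variable {N : ℕ}

theorem integrable_one_add_norm_sq_rpow (hN : 1 ≤ N) :
    Integrable fun z : E' N ↦ (1 + ‖z‖ ^ 2) ^ (-(N : ℝ) / 2) := by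
  refine integrable_rpow_neg_one_add_norm_sq ?_
  rw [finrank_euclideanSpace_fin]
  exact_mod_cast Nat.sub_lt hN one_pos

theorem PC_pos (hN : 1 ≤ N) : 0 < PC N :=
  inv_pos.2 <| integral_pos_of_integrable_nonneg_nonzero (x := 0)
    (.rpow_const (by fun_prop) fun z ↦ .inl (by positivity))
    (integrable_one_add_norm_sq_rpow hN) (fun z ↦ by positivity) (by simp)

theorem PC_mul_integral (hN : 1 ≤ N) :
    PC N * ∫ z : E' N, (1 + ‖z‖ ^ 2) ^ (-(N : ℝ) / 2) = 1 :=
  inv_mul_cancel₀ (inv_pos.1 (PC_pos hN)).ne'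

theorem Pker_pos (hN : 1 ≤ N) (z : E' N) {xN t : ℝ} (hR : 0 < xN + t) : 0 < Pker N z xN t := by
  have := PC_pos hN
  unfold Pker
  positivity

theorem measurable_Pker {xN : ℝ} : Measurable fun w : E' N × ℝ ↦ Pker N w.1 xN w.2 := by
  unfold Pker
  fun_prop

theorem Pker_eq_rescale (z : E' N) {xN t : ℝ} (hR : 0 < xN + t) :
    Pker N z xN t = PC N * (xN + t) ^ ((1 : ℝ) - N) *
      (1 + ‖(xN + t)⁻¹ • z‖ ^ 2) ^ (-(N : ℝ) / 2) := by
  rw [Pker, norm_smul, norm_inv, Real.norm_of_nonneg hR.le, mul_pow, inv_pow, inv_mul_eq_div]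

theorem integral_Pker (hN : 1 ≤ N) {xN t : ℝ} (hR : 0 < xN + t) :
    ∫ z : E' N, Pker N z xN t = 1 := by
  have scaling : (xN + t) ^ ((1 : ℝ) - N) * (xN + t) ^ (N - 1) = 1 := by
    rw [← Real.rpow_natCast, ← Real.rpow_add hR, Nat.cast_sub hN]
    simp
  simp_rw [Pker_eq_rescale _ hR]
  rw [integral_const_mul, Measure.integral_comp_inv_smul_of_nonneg volume
    (fun w : E' N ↦ (1 + ‖w‖ ^ 2) ^ (-(N : ℝ) / 2)) hR.le, finrank_euclideanSpace_fin, smul_eq_mul,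
    mul_assoc (PC N), ← mul_assoc (_ ^ _) (_ ^ _), scaling, one_mul, PC_mul_integral hN]

theorem integrable_Pker (hN : 1 ≤ N) {xN t : ℝ} (hR : 0 < xN + t) :
    Integrable fun z : E' N ↦ Pker N z xN t :=
  .of_integral_ne_zero (by simp [integral_Pker hN hR])

theorem eLpNorm_one_Pker (hN : 1 ≤ N) {xN t : ℝ} (hR : 0 < xN + t) :
    eLpNorm (fun z : E' N ↦ Pker N z xN t) 1 volume = 1 := by
  have hP_nonneg (z : E' N) : 0 ≤ Pker N z xN t := (Pker_pos hN z hR).le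
  rw [eLpNorm_one_eq_lintegral_enorm, lintegral_congr fun z ↦ Real.enorm_of_nonneg (hP_nonneg z),
    ← ofReal_integral_eq_lintegral_ofReal (integrable_Pker hN hR) (.of_forall hP_nonneg),
    integral_Pker hN hR, ENNReal.ofReal_one]

/-- The time derivative `∂_t P(x',x_N,t)` in closed form, for `R = x_N + t > 0`. At `R = 0` the
closed form is `0` by the convention `0⁻¹ = 0`. -/
def PkerDeriv (N : ℕ) (x' : E' N) (xN t : ℝ) : ℝ :=
  (xN + t)⁻¹ * (1 - N * ((xN + t) ^ 2 / ((xN + t) ^ 2 + ‖x'‖ ^ 2))) * Pker N x' xN t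

theorem hasDerivAt_Pker (z : E' N) {xN t : ℝ} (hR : 0 < xN + t) :
    HasDerivAt (fun τ ↦ Pker N z xN τ) (PkerDeriv N z xN t) t := by
  have hR_ne := hR.ne'
  have hB : 0 < 1 + ‖z‖ ^ 2 / (xN + t) ^ 2 := by positivity
  have deriv_R : HasDerivAt (fun τ ↦ xN + τ) 1 t := (hasDerivAt_id t).const_add xN
  have deriv_B : HasDerivAt (fun τ ↦ 1 + ‖z‖ ^ 2 / (xN + τ) ^ 2)
      (-2 * ‖z‖ ^ 2 / (xN + t) ^ 3) t := by
    refine (((deriv_R.pow 2).inv (pow_ne_zero 2 hR_ne)).const_mul (‖z‖ ^ 2)).const_add 1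
      |>.congr_deriv ?_
    simp only [Pi.pow_apply]
    field_simp
    norm_num
    ring
  refine ((deriv_R.rpow_const (p := 1 - N) (.inl hR_ne)).const_mul (PC N)).mul
    (deriv_B.rpow_const (p := -N / 2) (.inl hB.ne')) |>.congr_deriv ?_
  rw [PkerDeriv, Pker, Real.rpow_sub_one hR_ne, Real.rpow_sub_one hB.ne']
  field_simp
  ring

theorem abs_PkerDeriv_le (hN : 1 ≤ N) (z : E' N) {xN t : ℝ} (hR : 0 < xN + t) :
    |PkerDeriv N z xN t| ≤ N * (xN + t)⁻¹ * Pker N z xN t := by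
  have hN' : (1 : ℝ) ≤ N := by exact_mod_cast hN
  set u := (xN + t) ^ 2 / ((xN + t) ^ 2 + ‖z‖ ^ 2)
  have hu0 : 0 ≤ u := by positivity
  have hu1 : u ≤ 1 := div_le_one_of_le₀ (le_add_of_nonneg_right (by positivity)) (by positivity)
  have factor_le : |1 - N * u| ≤ N := abs_le.2 ⟨by nlinarith, by nlinarith⟩
  have hP := Pker_pos hN z hR
  calc |PkerDeriv N z xN t| = (xN + t)⁻¹ * |1 - N * u| * Pker N z xN t := by
        rw [PkerDeriv, abs_mul, abs_mul, abs_of_pos hP, abs_of_pos (inv_pos.2 hR)]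
    _ ≤ (xN + t)⁻¹ * N * Pker N z xN t := by gcongr
    _ = N * (xN + t)⁻¹ * Pker N z xN t := by rw [mul_comm (N : ℝ)]

theorem measurable_PkerDeriv {xN : ℝ} :
    Measurable fun w : E' N × ℝ ↦ PkerDeriv N w.1 xN w.2 := by
  have := measurable_Pker (N := N) (xN := xN)
  unfold PkerDeriv
  fun_prop

theorem aestronglyMeasurable_PkerDeriv_sub (xN t : ℝ) (μ : Measure (E' N × ℝ)) :
    AEStronglyMeasurable (fun w ↦ PkerDeriv N w.1 xN (t - w.2)) μ :=
  (measurable_PkerDeriv.comp (f := fun w : E' N × ℝ ↦ (w.1, t - w.2))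
    (by fun_prop)).aestronglyMeasurable

theorem eLpNorm_one_PkerDeriv_le (hN : 1 ≤ N) {xN t : ℝ} (hR : 0 < xN + t) :
    eLpNorm (fun z : E' N ↦ PkerDeriv N z xN t) 1 volume ≤ ENNReal.ofReal (N * (xN + t)⁻¹) := by
  have norm_le (z : E' N) : ‖PkerDeriv N z xN t‖ ≤ N * (xN + t)⁻¹ * ‖Pker N z xN t‖ := by
    rw [Real.norm_eq_abs, Real.norm_of_nonneg (Pker_pos hN z hR).le]
    exact abs_PkerDeriv_le hN z hR
  have h := eLpNorm_le_mul_eLpNorm_of_ae_le_mul (μ := volume) (.of_forall norm_le) 1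
  rwa [eLpNorm_one_Pker hN hR, mul_one] at h

end Kernel

section TimeIntegral

-- Multiply by `1 = (s + (t - s)) / t`; the part containing `s` is then bounded by AM-GM,
-- `2 √x √(t - s) ≤ x + (t - s)`, and `√s ≤ √t`.
theorem inv_add_mul_inv_sqrt_le {x s t : ℝ} (hx : 0 < x) (hs : s ∈ Ioo 0 t) :
    (x + (t - s))⁻¹ * (√s)⁻¹ ≤ t⁻¹ * (√s)⁻¹ + 2⁻¹ * (√t)⁻¹ * (√x)⁻¹ * (√(t - s))⁻¹ := by
  obtain ⟨hs0, hst⟩ := hs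
  have ht0 : 0 < t := hs0.trans hst
  have hts : 0 < t - s := sub_pos.2 hst
  have amgm : 2 * √x * √(t - s) ≤ x + (t - s) := by
    simpa [Real.sq_sqrt hx.le, Real.sq_sqrt hts.le] using two_mul_le_add_sq √x √(t - s)
  have hsqrt : √s ≤ √t := Real.sqrt_le_sqrt hst.le
  calc (x + (t - s))⁻¹ * (√s)⁻¹
      = t⁻¹ * ((t - s) / (x + (t - s))) * (√s)⁻¹ + √s * t⁻¹ * (x + (t - s))⁻¹ := by
        field_simp
        rw [Real.sq_sqrt hs0.le]
        ring
    _ ≤ t⁻¹ * 1 * (√s)⁻¹ + √t * t⁻¹ * (2 * √x * √(t - s))⁻¹ := by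
        gcongr
        exact div_le_one_of_le₀ (by linarith) (by positivity)
    _ = t⁻¹ * (√s)⁻¹ + 2⁻¹ * (√t)⁻¹ * (√x)⁻¹ * (√(t - s))⁻¹ := by
        rw [← div_eq_mul_inv √t, Real.sqrt_div_self]
        ring

theorem eqOn_rpow_neg_half_inv_sqrt :
    EqOn (fun s : ℝ ↦ s ^ (-(1 : ℝ) / 2)) (fun s ↦ (√s)⁻¹) (Ici 0) := fun s hs ↦ by
  simp only [Real.sqrt_eq_rpow, ← Real.rpow_neg hs.out, neg_div]

theorem intervalIntegrable_inv_sqrt {t : ℝ} (ht : 0 ≤ t) :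
    IntervalIntegrable (fun s ↦ (√s)⁻¹) volume 0 t :=
  (intervalIntegral.intervalIntegrable_rpow' (by norm_num)).congr <|
    eqOn_rpow_neg_half_inv_sqrt.mono fun s hs ↦ (uIoc_of_le ht ▸ hs).1.le

theorem integral_inv_sqrt {t : ℝ} (ht : 0 ≤ t) : ∫ s in (0 : ℝ)..t, (√s)⁻¹ = 2 * √t := by
  rw [← intervalIntegral.integral_congr
      (eqOn_rpow_neg_half_inv_sqrt.mono fun s hs ↦ (uIcc_of_le ht ▸ hs).1),
    integral_rpow (.inl (by norm_num)), Real.sqrt_eq_rpow]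
  norm_num
  ring

theorem lintegral_inv_add_mul_inv_sqrt_le {x t : ℝ} (hx : 0 < x) (ht : 0 < t) :
    ∫⁻ s in Ioo 0 t, ENNReal.ofReal ((x + (t - s))⁻¹ * (√s)⁻¹) ≤
      ENNReal.ofReal (2 * (√t)⁻¹ + (√x)⁻¹) := by
  set c := 2⁻¹ * (√t)⁻¹ * (√x)⁻¹
  have hint : IntervalIntegrable (fun s ↦ t⁻¹ * (√s)⁻¹) volume 0 t :=
    (intervalIntegrable_inv_sqrt ht.le).const_mul _
  have hint_sub : IntervalIntegrable (fun s ↦ c * (√(t - s))⁻¹) volume 0 t := by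
    simpa using ((intervalIntegrable_inv_sqrt ht.le).comp_sub_left t).symm.const_mul c
  have integral_sub : ∫ s in (0 : ℝ)..t, (√(t - s))⁻¹ = 2 * √t := by
    rw [intervalIntegral.integral_comp_sub_left fun s ↦ (√s)⁻¹, sub_self, sub_zero,
      integral_inv_sqrt ht.le]
  calc ∫⁻ s in Ioo 0 t, ENNReal.ofReal ((x + (t - s))⁻¹ * (√s)⁻¹)
      ≤ ∫⁻ s in Ioo 0 t, ENNReal.ofReal (t⁻¹ * (√s)⁻¹ + c * (√(t - s))⁻¹) :=
        setLIntegral_mono' measurableSet_Ioo fun s hs ↦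
          ENNReal.ofReal_le_ofReal (inv_add_mul_inv_sqrt_le hx hs)
    _ = ENNReal.ofReal (∫ s in (0 : ℝ)..t, (t⁻¹ * (√s)⁻¹ + c * (√(t - s))⁻¹)) := by
        rw [intervalIntegral.integral_of_le ht.le, integral_Ioc_eq_integral_Ioo,
          ofReal_integral_eq_lintegral_ofReal]
        · exact (intervalIntegrable_iff_integrableOn_Ioo_of_le ht.le).1 (hint.add hint_sub)
        · exact .of_forall fun s ↦ by simp only [Pi.zero_apply]; positivity
    _ = ENNReal.ofReal (2 * (√t)⁻¹ + (√x)⁻¹) := by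
        rw [intervalIntegral.integral_add hint hint_sub, intervalIntegral.integral_const_mul,
          intervalIntegral.integral_const_mul, integral_inv_sqrt ht.le, integral_sub]
        congr 1
        simp only [c]
        field_simp
        linear_combination 2 * √x * Real.sq_sqrt ht.le

end TimeIntegral

section BoundaryOperator

variable {N : ℕ}

/-- The boundary trace `∂_{x_N} v(·,0,s)` of the normal derivative, the only datum of `v` on which
`F[v]` depends. -/
def boundaryDeriv (N : ℕ) (v : HS N → ℝ → ℝ) (s : ℝ) (y : E' N) : ℝ := dN N v (y, 0) s

theorem continuousOn_boundaryDeriv {T : ℝ} {v : HS N → ℝ → ℝ}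
    (hv : ContinuousOn (fun z : HS N × ℝ ↦ dN N v z.1 z.2) (closedHalfSpace N ×ˢ Ioo 0 T)) :
    ContinuousOn (fun w : E' N × ℝ ↦ boundaryDeriv N v w.2 w.1) (univ ×ˢ Ioo 0 T) :=
  hv.comp (f := fun w : E' N × ℝ ↦ ((w.1, (0 : ℝ)), w.2)) (by fun_prop)
    fun w hw ↦ ⟨le_refl (0 : ℝ), hw.2⟩

theorem eLpNorm_boundaryDeriv_le (v : HS N → ℝ → ℝ) {q p r : ℝ≥0∞} (hr : r ∈ Icc q p)
    (M : ℝ) {T s : ℝ} (hs : s ∈ Ioo 0 T) :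
    eLpNorm (boundaryDeriv N v s) r volume ≤
      ENNReal.ofReal ((√s)⁻¹ * Real.exp (M * s)) * XNorm N q p T M v := by
  set weight := Real.exp (-M * s) * s ^ ((1 : ℝ) / 2)
  have weight_inv : (√s)⁻¹ * Real.exp (M * s) * weight = 1 := by
    have := Real.sqrt_pos.2 hs.1
    simp only [weight]
    rw [← Real.sqrt_eq_rpow, neg_mul, Real.exp_neg]
    field_simp
  have weight_mul_le : ENNReal.ofReal weight * eLpNorm (boundaryDeriv N v s) r volume ≤
      XNorm N q p T M v := by
    rw [ENNReal.ofReal_mul (Real.exp_nonneg _), mul_assoc]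
    refine le_iSup₂_of_le (f := fun t (_ : t ∈ Ioo (0 : ℝ) T) ↦
      ENNReal.ofReal (Real.exp (-M * t)) * Enorm N q p v t) s hs ?_
    gcongr
    refine le_add_left <| le_iSup₂_of_le (f := fun r (_ : r ∈ Icc q p) ↦
      ENNReal.ofReal (s ^ ((1 : ℝ) / 2)) * bLpNorm N r (fun x' ↦ dN N v (x', 0) s)) r hr le_rfl
  calc eLpNorm (boundaryDeriv N v s) r volume
      = ENNReal.ofReal ((√s)⁻¹ * Real.exp (M * s)) *
          (ENNReal.ofReal weight * eLpNorm (boundaryDeriv N v s) r volume) := by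
        rw [← mul_assoc, ← ENNReal.ofReal_mul (by positivity), weight_inv, ENNReal.ofReal_one,
          one_mul]
    _ ≤ ENNReal.ofReal ((√s)⁻¹ * Real.exp (M * s)) * XNorm N q p T M v := by gcongr

theorem Fop_eq_convolution (v : HS N → ℝ → ℝ) (x : E' N) {xN : ℝ} (hx : 0 < xN) (t : ℝ) :
    Fop N v (x, xN) t =
      ((fun z ↦ Pker N z xN 0) ⋆[mul ℝ ℝ, volume] boundaryDeriv N v t) x +
        ∫ s in Ioo 0 t,
          ((fun z ↦ PkerDeriv N z xN (t - s)) ⋆[mul ℝ ℝ, volume] boundaryDeriv N v s) x := by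
  simp only [Fop, convolution_eq_swap, mul_apply', boundaryDeriv]
  congr 1
  refine setIntegral_congr_fun measurableSet_Ioo fun s hs ↦ ?_
  have hR : 0 < xN + (t - s) := add_pos hx (sub_pos.2 hs.2)
  simp only [(hasDerivAt_Pker _ hR).deriv]

theorem eLpNorm_Pker_convolution_le (hN : 1 ≤ N) {xN t : ℝ} (hR : 0 < xN + t) {g : E' N → ℝ}
    (hg : AEStronglyMeasurable g volume) {r : ℝ≥0∞} (hr : 1 ≤ r) :
    eLpNorm ((fun z ↦ Pker N z xN t) ⋆[mul ℝ ℝ, volume] g) r volume ≤ eLpNorm g r volume := by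
  refine (eLpNorm_convolution_le (mul ℝ ℝ) (integrable_Pker hN hR).1 hg hr).trans_eq ?_
  rw [opENorm_mul, eLpNorm_one_Pker hN hR, one_mul, one_mul]

theorem eLpNorm_integral_PkerDeriv_convolution_le (hN : 1 ≤ N) {xN t : ℝ} (hx : 0 < xN)
    {g : E' N × ℝ → ℝ}
    (hg : AEStronglyMeasurable g (volume.prod (volume.restrict (Ioo 0 t)))) {r : ℝ≥0∞}
    (hr : 1 ≤ r) :
    eLpNorm (fun x ↦ ∫ s in Ioo 0 t,
      ((fun z ↦ PkerDeriv N z xN (t - s)) ⋆[mul ℝ ℝ, volume] fun y ↦ g (y, s)) x) r volume ≤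
      ∫⁻ s in Ioo 0 t, ENNReal.ofReal (N * (xN + (t - s))⁻¹) *
        eLpNorm (fun y ↦ g (y, s)) r volume := by
  have kernel_le (s : ℝ) (hs : s ∈ Ioo 0 t) :
      ‖mul ℝ ℝ‖ₑ * eLpNorm (fun z : E' N ↦ PkerDeriv N z xN (t - s)) 1 volume ≤
        ENNReal.ofReal (N * (xN + (t - s))⁻¹) := by
    rw [opENorm_mul, one_mul]
    exact eLpNorm_one_PkerDeriv_le hN (add_pos hx (sub_pos.2 hs.2))
  calc _ ≤ ∫⁻ s in Ioo 0 t, ‖mul ℝ ℝ‖ₑ *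
          eLpNorm (fun z : E' N ↦ PkerDeriv N z xN (t - s)) 1 volume *
            eLpNorm (fun y ↦ g (y, s)) r volume :=
        eLpNorm_integral_convolution_le _ (aestronglyMeasurable_PkerDeriv_sub xN t _) hg hr
    _ ≤ _ := setLIntegral_mono' measurableSet_Ioo fun s hs ↦ by gcongr; exact kernel_le s hs

theorem bLpNorm_Fop_le (hN : 1 ≤ N) {v : HS N → ℝ → ℝ} {T : ℝ}
    (hv : ContinuousOn (fun w : E' N × ℝ ↦ boundaryDeriv N v w.2 w.1) (univ ×ˢ Ioo 0 T))
    {r : ℝ≥0∞} (hr : 1 ≤ r) {xN : ℝ} (hx : 0 < xN) {t : ℝ} (ht : t ∈ Ioo 0 T) :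
    bLpNorm N r (fun x' ↦ Fop N v (x', xN) t) ≤ eLpNorm (boundaryDeriv N v t) r volume +
      ∫⁻ s in Ioo 0 t, ENNReal.ofReal (N * (xN + (t - s))⁻¹) *
        eLpNorm (boundaryDeriv N v s) r volume := by
  have hR : 0 < xN + 0 := by simpa using hx
  have trace_meas : AEStronglyMeasurable (boundaryDeriv N v t) volume :=
    (continuousOn_univ.1 <| hv.comp (f := fun y ↦ (y, t)) (by fun_prop)
      fun y _ ↦ ⟨mem_univ y, ht⟩).aestronglyMeasurable
  have history_meas : AEStronglyMeasurable (fun w : E' N × ℝ ↦ boundaryDeriv N v w.2 w.1)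
      (volume.prod (volume.restrict (Ioo 0 t))) := by
    have := (hv.mono (prod_mono_right (Ioo_subset_Ioo_right ht.2.le))).aestronglyMeasurable
      (μ := volume) (MeasurableSet.univ.prod measurableSet_Ioo)
    rwa [Measure.volume_eq_prod, ← Measure.prod_restrict, Measure.restrict_univ] at this
  calc bLpNorm N r (fun x' ↦ Fop N v (x', xN) t)
      ≤ eLpNorm ((fun z ↦ Pker N z xN 0) ⋆[mul ℝ ℝ, volume] boundaryDeriv N v t) r volume +
          eLpNorm (fun x ↦ ∫ s in Ioo 0 t, ((fun z ↦ PkerDeriv N z xN (t - s)) ⋆[mul ℝ ℝ, volume]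
            boundaryDeriv N v s) x) r volume := by
        rw [bLpNorm, funext fun x ↦ Fop_eq_convolution v x hx t]
        exact eLpNorm_add_le
          ((integrable_Pker hN hR).1.convolution_integrand _ trace_meas).integral_prod_right'
          (aestronglyMeasurable_convolution_prodMk _ (aestronglyMeasurable_PkerDeriv_sub xN t _)
            history_meas).integral_prod_right' hr
    _ ≤ eLpNorm (boundaryDeriv N v t) r volume + ∫⁻ s in Ioo 0 t,
          ENNReal.ofReal (N * (xN + (t - s))⁻¹) * eLpNorm (boundaryDeriv N v s) r volume :=
        add_le_add (eLpNorm_Pker_convolution_le hN hR trace_meas hr)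
          (eLpNorm_integral_PkerDeriv_convolution_le hN hx history_meas hr)

theorem lintegral_inv_mul_eLpNorm_boundaryDeriv_le (v : HS N → ℝ → ℝ) {q p r : ℝ≥0∞}
    (hr : r ∈ Icc q p) {M : ℝ} (hM : 0 ≤ M) {xN : ℝ} (hx : 0 < xN) {T t : ℝ} (ht : t ∈ Ioo 0 T) :
    ∫⁻ s in Ioo 0 t, ENNReal.ofReal (N * (xN + (t - s))⁻¹) *
        eLpNorm (boundaryDeriv N v s) r volume ≤
      ENNReal.ofReal (N * (2 * (√t)⁻¹ + (√xN)⁻¹) * Real.exp (M * t)) * XNorm N q p T M v := by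
  have integrand_le (s : ℝ) (hs : s ∈ Ioo 0 t) :
      ENNReal.ofReal (N * (xN + (t - s))⁻¹) * eLpNorm (boundaryDeriv N v s) r volume ≤
        ENNReal.ofReal ((xN + (t - s))⁻¹ * (√s)⁻¹) *
          (ENNReal.ofReal (N * Real.exp (M * t)) * XNorm N q p T M v) := by
    have hR : 0 < xN + (t - s) := add_pos hx (sub_pos.2 hs.2)
    have hexp : Real.exp (M * s) ≤ Real.exp (M * t) := by gcongr; exact hs.2.le
    refine (mul_le_mul_right (eLpNorm_boundaryDeriv_le v hr M ⟨hs.1, hs.2.trans ht.2⟩) _).trans ?_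
    rw [← mul_assoc, ← mul_assoc, ← ENNReal.ofReal_mul (by positivity),
      ← ENNReal.ofReal_mul (by positivity)]
    gcongr ENNReal.ofReal ?_ * _
    calc N * (xN + (t - s))⁻¹ * ((√s)⁻¹ * Real.exp (M * s))
        ≤ N * (xN + (t - s))⁻¹ * ((√s)⁻¹ * Real.exp (M * t)) := by gcongr
      _ = (xN + (t - s))⁻¹ * (√s)⁻¹ * (N * Real.exp (M * t)) := by ring
  calc _ ≤ ∫⁻ s in Ioo 0 t, ENNReal.ofReal ((xN + (t - s))⁻¹ * (√s)⁻¹) *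
          (ENNReal.ofReal (N * Real.exp (M * t)) * XNorm N q p T M v) :=
        setLIntegral_mono' measurableSet_Ioo integrand_le
    _ ≤ ENNReal.ofReal (2 * (√t)⁻¹ + (√xN)⁻¹) *
          (ENNReal.ofReal (N * Real.exp (M * t)) * XNorm N q p T M v) := by
        rw [lintegral_mul_const _ (by fun_prop)]
        gcongr
        exact lintegral_inv_add_mul_inv_sqrt_le hx ht.1
    _ = _ := by
        rw [← mul_assoc, ← ENNReal.ofReal_mul (by positivity)]
        ring_nf

end BoundaryOperator

theorem stmt_4_general {N : ℕ} (hN : 1 ≤ N) {v : HS N → ℝ → ℝ} {T : ℝ}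
    (hv : ContinuousOn (fun w : E' N × ℝ ↦ boundaryDeriv N v w.2 w.1) (univ ×ˢ Ioo 0 T))
    {q p r : ℝ≥0∞} (hr1 : 1 ≤ r) (hr : r ∈ Icc q p) {M : ℝ} (hM : 0 ≤ M) {xN : ℝ} (hx : 0 < xN)
    {t : ℝ} (ht : t ∈ Ioo 0 T) :
    bLpNorm N r (fun x' ↦ Fop N v (x', xN) t) ≤
      ENNReal.ofReal ((1 + 2 * N) * (1 + (xN⁻¹ * t) ^ ((1 : ℝ) / 2)) * t ^ (-(1 : ℝ) / 2) *
        Real.exp (M * t)) * XNorm N q p T M v := by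
  have ht0 : 0 < t := ht.1
  have factor_eq : (1 + (xN⁻¹ * t) ^ ((1 : ℝ) / 2)) * t ^ (-(1 : ℝ) / 2) =
      (√t)⁻¹ + (√xN)⁻¹ := by
    rw [show t ^ (-(1 : ℝ) / 2) = (√t)⁻¹ from eqOn_rpow_neg_half_inv_sqrt ht0.le,
      ← Real.sqrt_eq_rpow, Real.sqrt_mul (by positivity), Real.sqrt_inv, one_add_mul,
      mul_inv_cancel_right₀ (Real.sqrt_pos.2 ht0).ne']
  calc bLpNorm N r (fun x' ↦ Fop N v (x', xN) t)
      ≤ ENNReal.ofReal ((√t)⁻¹ * Real.exp (M * t)) * XNorm N q p T M v +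
          ENNReal.ofReal (N * (2 * (√t)⁻¹ + (√xN)⁻¹) * Real.exp (M * t)) * XNorm N q p T M v :=
        (bLpNorm_Fop_le hN hv hr1 hx ht).trans <| add_le_add (eLpNorm_boundaryDeriv_le v hr M ht)
          (lintegral_inv_mul_eLpNorm_boundaryDeriv_le v hr hM hx ht)
    _ = ENNReal.ofReal (((√t)⁻¹ + N * (2 * (√t)⁻¹ + (√xN)⁻¹)) * Real.exp (M * t)) *
          XNorm N q p T M v := by
        rw [← add_mul, ← ENNReal.ofReal_add (by positivity) (by positivity), ← add_mul]
    _ ≤ _ := by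
        rw [mul_assoc (1 + 2 * (N : ℝ)), factor_eq]
        gcongr ENNReal.ofReal (?_ * _) * _
        linarith [show 0 ≤ (√xN)⁻¹ by positivity, show 0 ≤ N * (√xN)⁻¹ by positivity]

/-- let `1 ≤ q < ∞` and `p ∈ (Nq/(N-1), ∞]`. There exists `C > 0`,
independent of `T` and `M`, such that for all `T > 0`, `M ≥ 1`, `v ∈ X_{T,M}` and any
`r ∈ [q,p]`: `‖F[v](·,x_N,t)‖_{L^r(ℝ^{N-1})} ≤ C (1 + (x_N^{-1} t)^{1/2}) t^{-1/2} e^{Mt}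
‖v‖_{X_{T,M}}` for all `x_N ∈ (0,∞)` and `0 < t < T`. -/
theorem stmt_4 (N : ℕ) (hN : 2 ≤ N) (q p : ℝ≥0∞) (hq1 : 1 ≤ q) (hq2 : q ≠ ∞)
    (hp1 : (N : ℝ≥0∞) * q / ((N : ℝ≥0∞) - 1) < p) :
    ∃ C : ℝ, 0 < C ∧ ∀ T M : ℝ, 0 < T → 1 ≤ M → ∀ v : HS N → ℝ → ℝ,
      memX N q p T M v → ∀ r : ℝ≥0∞, q ≤ r → r ≤ p →
        ∀ xN : ℝ, 0 < xN → ∀ t ∈ Ioo (0 : ℝ) T,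
          bLpNorm N r (fun x' : E' N => Fop N v (x', xN) t) ≤
            ENNReal.ofReal
                (C * (1 + (xN⁻¹ * t) ^ ((1 : ℝ) / 2)) * t ^ (-(1 : ℝ) / 2) *
                  Real.exp (M * t)) *
              XNorm N q p T M v := by
  exact ⟨1 + 2 * N, by positivity, fun T M _ hM v hv r hqr hrp xN hx t ht ↦
    stmt_4_general (by lia) (continuousOn_boundaryDeriv hv.2.1) (hq1.trans hqr) ⟨hqr, hrp⟩
      (by linarith) hx ht⟩

end
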